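/- For every dimension d ∈ ℕ and every ε > 0, there exist n ∈ ℕ and a probability vector ω ∈ ℝ^n such that for all probability vectors p, p' ∈ ℝ^d there exists a probability vector ω' ∈ ℝ^n with d(ω, ω') ≤ ε and p ⊗ ω ≻ p' ⊗ ω' (majorization of the dn-dimensional product vectors). In other words, allowing an arbitrarily small trace-distance error on an unbounded-dimension catalyst enables every state transition under noisy operations. -/

import Mathlib

open scoped BigOperators Topology
open Filter

/-- A probability vector: nonnegative entries summing to 1. -/
def IsProbVec {ι : Type*} [Fintype ι] (p : ι → ℝ) : Prop :=
  (∀ i, 0 ≤ p i) ∧ ∑ i, p i = 1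

/-- The sum of the `k` largest entries of `p`, as the supremum of sums over subsets of size `k`. -/
noncomputable def topSum {ι : Type*} [Fintype ι] (p : ι → ℝ) (k : ℕ) : ℝ :=
  sSup {x : ℝ | ∃ s : Finset ι, s.card = k ∧ x = ∑ i ∈ s, p i}

/-- `p` majorizes `p'`: for every `1 ≤ k ≤ d`, the sum of the `k` largest entries of `p`
is at least that of `p'`. -/
def Majorizes {ι : Type*} [Fintype ι] (p p' : ι → ℝ) : Prop :=
  ∀ k : ℕ, 1 ≤ k → k ≤ Fintype.card ι → topSum p' k ≤ topSum p k

/-- A column-stochastic matrix: nonnegative entries, each column sums to 1. -/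
def ColStochastic {ι κ : Type*} [Fintype ι] [Fintype κ] (Λ : Matrix ι κ ℝ) : Prop :=
  (∀ i j, 0 ≤ Λ i j) ∧ ∀ j, ∑ i, Λ i j = 1

/-- A bistochastic (doubly stochastic) matrix. -/
def Bistochastic {ι : Type*} [Fintype ι] (A : Matrix ι ι ℝ) : Prop :=
  (∀ i j, 0 ≤ A i j) ∧ (∀ i, ∑ j, A i j = 1) ∧ (∀ j, ∑ i, A i j = 1)

/-- Real power with the convention `0 ^ a = 0` (in particular `0 ^ 0 = 0`). -/
noncomputable def rpow0 (x a : ℝ) : ℝ := if x = 0 then 0 else x ^ a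

/-- The classical Rényi divergence `D_α(p‖q)`, with the conventions `0^0 = 0`, `0·ln 0 = 0`;
for `α < 0` the prefactor is `1/(1-α)`, for `α ∈ [0,1)∪(1,∞)` it is `1/(α-1)`,
and `D_1` is the Kullback–Leibler divergence. -/
noncomputable def renyiD {ι : Type*} [Fintype ι] (α : ℝ) (p q : ι → ℝ) : ℝ :=
  if α = 1 then ∑ i, p i * Real.log (p i / q i)
  else if α < 0 then (1 / (1 - α)) * Real.log (∑ i, rpow0 (p i) α * rpow0 (q i) (1 - α))
  else (1 / (α - 1)) * Real.log (∑ i, rpow0 (p i) α * rpow0 (q i) (1 - α))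

/-- The Rényi entropy `H_α(p) = (sgn α / (1-α)) ln ∑ p_i^α`, with `H_1` the Shannon entropy. -/
noncomputable def renyiH {ι : Type*} [Fintype ι] (α : ℝ) (p : ι → ℝ) : ℝ :=
  if α = 1 then -∑ i, p i * Real.log (p i)
  else ((if 0 ≤ α then (1 : ℝ) else -1) / (1 - α)) * Real.log (∑ i, rpow0 (p i) α)

/-- Trace (total variation) distance between probability vectors. -/
noncomputable def traceDist {ι : Type*} [Fintype ι] (p p' : ι → ℝ) : ℝ :=
  (1 / 2) * ∑ i, |p i - p' i|

/-- Tensor product of two vectors: `(p ⊗ r)_{(i,j)} = p_i r_j`. -/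
def tensorVec {ι κ : Type*} (p : ι → ℝ) (r : κ → ℝ) : ι × κ → ℝ :=
  fun x => p x.1 * r x.2

/-!
Let `e` be a deterministic vector and `u` the uniform one. Averages over permutations give
`p ⊗ ω ≻ u ⊗ ω` and `e ⊗ ω' ≻ p' ⊗ ω'` for all `p`, `p'`, `ω`, `ω'`, so it suffices to find nearby
`ω`, `ω'` for which `u ⊗ ω` is a permutation of `e ⊗ ω'`. Take `ω` and `ω'` to be the averages of
`v l = u ^ ⊗ l ⊗ e ^ ⊗ (K - l)` over `0 ≤ l < K` and over `1 ≤ l ≤ K`. A cyclic shift of the `K + 1`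
tensor factors carries `u ⊗ v l` to `e ⊗ v (l + 1)`, while `ω - ω'` telescopes to
`(v 0 - v K) / K`, so `d(ω, ω') ≤ 1 / K`.
-/

section ProbabilityVectors

variable {ι κ : Type*} [Fintype ι] [Fintype κ]

lemma IsProbVec.comp_equiv {p : κ → ℝ} (hp : IsProbVec p) (e : ι ≃ κ) : IsProbVec (p ∘ e) :=
  ⟨fun i => hp.1 (e i), (Equiv.sum_comp e p).trans hp.2⟩

lemma isProbVec_single [DecidableEq ι] (c : ι) : IsProbVec (Pi.single c 1 : ι → ℝ) :=
  single_mem_stdSimplex ℝ c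

lemma isProbVec_uniform (ι : Type*) [Fintype ι] [Nonempty ι] :
    IsProbVec fun _ : ι => (Fintype.card ι : ℝ)⁻¹ :=
  ⟨fun _ => by positivity, by simp⟩

lemma isProbVec_expect {α : Type*} {s : Finset α} (hs : s.Nonempty) {v : α → ι → ℝ}
    (hv : ∀ j ∈ s, IsProbVec (v j)) : IsProbVec (𝔼 j ∈ s, v j) := by
  refine ⟨fun i => ?_, ?_⟩
  · rw [Finset.expect_apply]
    exact Finset.expect_nonneg fun j hj => (hv j hj).1 i
  · simp only [Finset.expect_apply]
    rw [← Finset.expect_sum_comm, Finset.expect_congr rfl fun j hj => (hv j hj).2,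
      Finset.expect_const hs]

lemma traceDist_comp_equiv (p q : κ → ℝ) (e : ι ≃ κ) :
    traceDist (p ∘ e) (q ∘ e) = traceDist p q :=
  congrArg (1 / 2 * ·) (Equiv.sum_comp e fun x => |p x - q x|)

lemma IsProbVec.traceDist_le_one {p q : ι → ℝ} (hp : IsProbVec p) (hq : IsProbVec q) :
    traceDist p q ≤ 1 := by
  have sum_abs_le : ∑ i, |p i - q i| ≤ ∑ i, (p i + q i) :=
    Finset.sum_le_sum fun i _ =>
      abs_le.mpr ⟨by linarith [hp.1 i], by linarith [hq.1 i]⟩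
  rw [Finset.sum_add_distrib, hp.2, hq.2] at sum_abs_le
  rw [traceDist]
  linarith

lemma traceDist_expect_range_succ (v : ℕ → ι → ℝ) (K : ℕ) :
    traceDist (𝔼 l ∈ Finset.range K, v l) (𝔼 l ∈ Finset.range K, v (l + 1)) =
      traceDist (v 0) (v K) / K := by
  have abs_sub_eq (i : ι) : |(𝔼 l ∈ Finset.range K, v l) i - (𝔼 l ∈ Finset.range K, v (l + 1)) i| =
      |v 0 i - v K i| / K := by
    rw [Finset.expect_apply, Finset.expect_apply, ← Finset.expect_sub_distrib,
      Finset.expect_eq_sum_div_card, Finset.sum_range_sub' (fun l => v l i), Finset.card_range,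
      abs_div, Nat.abs_cast]
  simp only [traceDist, abs_sub_eq, ← Finset.sum_div, mul_div_assoc]

end ProbabilityVectors

section Majorization

variable {ι κ : Type*} [Fintype ι] [Fintype κ]

lemma sum_le_topSum (v : ι → ℝ) (s : Finset ι) : ∑ i ∈ s, v i ≤ topSum v s.card := by
  refine le_csSup (Set.Finite.bddAbove ?_) ⟨s, rfl, rfl⟩
  refine (Set.finite_range fun t : Finset ι => ∑ i ∈ t, v i).subset ?_
  rintro _ ⟨t, -, rfl⟩
  exact ⟨t, rfl⟩

lemma topSum_le {v : ι → ℝ} {k : ℕ} {c : ℝ} (hk : k ≤ Fintype.card ι)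
    (h : ∀ s : Finset ι, s.card = k → ∑ i ∈ s, v i ≤ c) : topSum v k ≤ c := by
  obtain ⟨s, -, hs⟩ := Finset.exists_subset_card_eq (s := (Finset.univ : Finset ι)) hk
  refine csSup_le ⟨_, s, hs, rfl⟩ ?_
  rintro _ ⟨t, ht, rfl⟩
  exact h t ht

lemma topSum_comp_equiv (v : κ → ℝ) (e : ι ≃ κ) (k : ℕ) : topSum (v ∘ e) k = topSum v k :=
  congrArg sSup <| Set.ext fun _ => e.finsetCongr.exists_congr fun s => by simp

lemma Majorizes.trans {u v w : ι → ℝ} (huv : Majorizes u v) (hvw : Majorizes v w) :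
    Majorizes u w :=
  fun k hk hk' => (hvw k hk hk').trans (huv k hk hk')

lemma majorizes_comp_perm (v : ι → ℝ) (σ : Equiv.Perm ι) : Majorizes (v ∘ σ) v :=
  fun k _ _ => (topSum_comp_equiv v σ k).ge

lemma Majorizes.comp_equiv {v w : κ → ℝ} (h : Majorizes v w) (e : ι ≃ κ) :
    Majorizes (v ∘ e) (w ∘ e) := fun k hk hk' => by
  simpa only [topSum_comp_equiv] using h k hk (Fintype.card_congr e ▸ hk')

theorem majorizes_sum_mul_comp_perm (v : ι → ℝ) {w : κ → ℝ} (hw : IsProbVec w)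
    (σ : κ → Equiv.Perm ι) : Majorizes v fun x => ∑ j, w j * v (σ j x) := by
  refine fun k _ hk => topSum_le hk ?_
  rintro s rfl
  have sum_perm_le (j : κ) : ∑ x ∈ s, v (σ j x) ≤ topSum v s.card := by
    simpa only [Finset.sum_map, Finset.card_map, Equiv.coe_toEmbedding]
      using sum_le_topSum v (s.map (σ j).toEmbedding)
  calc ∑ x ∈ s, ∑ j, w j * v (σ j x)
      = ∑ j, w j * ∑ x ∈ s, v (σ j x) := by
        rw [Finset.sum_comm]
        simp only [Finset.mul_sum]
    _ ≤ ∑ j, w j * topSum v s.card :=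
        Finset.sum_le_sum fun j _ => mul_le_mul_of_nonneg_left (sum_perm_le j) (hw.1 j)
    _ = topSum v s.card := by rw [← Finset.sum_mul, hw.2, one_mul]

theorem majorizes_expect_comp_perm [Nonempty κ] (v : ι → ℝ) (σ : κ → Equiv.Perm ι) :
    Majorizes v fun x => 𝔼 j, v (σ j x) := by
  simpa only [Fintype.expect_eq_sum_div_card, div_eq_inv_mul, Finset.mul_sum]
    using majorizes_sum_mul_comp_perm v (isProbVec_uniform κ) σ

lemma expect_perm_apply {M : Type*} [AddCommMonoid M] [Module ℚ≥0 M] [DecidableEq ι]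
    (v : ι → M) (a : ι) :
    𝔼 σ : Equiv.Perm ι, v (σ a) = 𝔼 b, v b := by
  have : Nonempty ι := ⟨a⟩
  have expect_eq (b : ι) : 𝔼 σ : Equiv.Perm ι, v (σ a) = 𝔼 σ : Equiv.Perm ι, v (σ b) :=
    Fintype.expect_equiv (Equiv.mulRight (Equiv.swap a b)) _ _ fun σ => by simp
  calc 𝔼 σ : Equiv.Perm ι, v (σ a)
      = 𝔼 b, 𝔼 σ : Equiv.Perm ι, v (σ b) := by
        rw [← Finset.expect_congr rfl fun b _ => expect_eq b, Fintype.expect_const]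
    _ = 𝔼 σ : Equiv.Perm ι, 𝔼 b, v (σ b) := Finset.expect_comm _ _ _
    _ = 𝔼 _σ : Equiv.Perm ι, 𝔼 b, v b :=
        Finset.expect_congr rfl fun σ _ => Fintype.expect_equiv σ _ _ fun _ => rfl
    _ = 𝔼 b, v b := Fintype.expect_const _

theorem tensorVec_majorizes_tensorVec_expect (p : ι → ℝ) (r : κ → ℝ) :
    Majorizes (tensorVec p r) (tensorVec (fun _ => 𝔼 b, p b) r) := by
  classical
  convert majorizes_expect_comp_perm (tensorVec p r)
    fun σ : Equiv.Perm ι => σ.prodCongr (Equiv.refl κ) using 2 with x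
  simp only [tensorVec, Equiv.prodCongr_apply, Prod.map, Equiv.refl_apply,
    ← Finset.expect_mul, expect_perm_apply]

theorem tensorVec_single_majorizes_tensorVec [DecidableEq ι] (c : ι) {q : ι → ℝ}
    (hq : IsProbVec q) (r : κ → ℝ) :
    Majorizes (tensorVec (Pi.single c 1) r) (tensorVec q r) := by
  convert majorizes_sum_mul_comp_perm (tensorVec (Pi.single c 1) r) hq
    fun i => (Equiv.swap i c).prodCongr (Equiv.refl κ) using 2 with x
  have swap_eq (i : ι) : Equiv.swap i c x.1 = c ↔ x.1 = i := by
    rw [Equiv.swap_apply_eq_iff, Equiv.swap_apply_right]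
  simp [tensorVec, Pi.single_apply, swap_eq]

end Majorization

section Embezzling

variable {ι : Type*}

/-- The product vector `b ^ ⊗ l ⊗ a ^ ⊗ (K - l)` on `K` sites, for `l ≤ K`: the vectors
interpolating between `a ^ ⊗ K` and `b ^ ⊗ K` from which embezzling catalysts are averaged. -/
def mixedPower (a b : ι → ℝ) (K l : ℕ) : (Fin K → ι) → ℝ :=
  fun f => ∏ i : Fin K, if (i : ℕ) < l then b (f i) else a (f i)

lemma isProbVec_mixedPower [Fintype ι] {a b : ι → ℝ} (ha : IsProbVec a) (hb : IsProbVec b)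
    (K l : ℕ) : IsProbVec (mixedPower a b K l) := by
  constructor
  · intro f
    refine Finset.prod_nonneg fun i _ => ?_
    split_ifs
    exacts [hb.1 _, ha.1 _]
  · simp only [mixedPower]
    rw [← Fintype.prod_sum fun (i : Fin K) x => if (i : ℕ) < l then b x else a x]
    refine Finset.prod_eq_one fun i _ => ?_
    split_ifs
    exacts [hb.2, ha.2]

/-- The cyclic shift of `K + 1` sites, of which the one outside the catalyst `Fin K → ι` stands
first: it enters the catalyst at the front, and the last site of the catalyst comes out. -/
def cyclicShift (ι : Type*) (K : ℕ) : Equiv.Perm (ι × (Fin K → ι)) :=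
  (Fin.consEquiv fun _ => ι).trans (Fin.snocEquiv fun _ => ι).symm

lemma tensorVec_mixedPower (a b : ι → ℝ) {K l : ℕ} (hl : l < K) :
    tensorVec b (mixedPower a b K l) =
      tensorVec a (mixedPower a b K (l + 1)) ∘ cyclicShift ι K := by
  funext ⟨x, f⟩
  let g : Fin (K + 1) → ι := Fin.cons x f
  let factor (i : Fin (K + 1)) : ℝ := if (i : ℕ) < l + 1 then b (g i) else a (g i)
  calc b x * mixedPower a b K l f
      = ∏ i, factor i := by simp [Fin.prod_univ_succ, mixedPower, factor, g]
    _ = a (g (Fin.last K)) * mixedPower a b K (l + 1) (Fin.init g) := by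
        rw [Fin.prod_univ_castSucc, mul_comm]
        simp [mixedPower, factor, Fin.init, hl.not_ge]

lemma tensorVec_expect {κ α : Type*} (p : ι → ℝ) (s : Finset α) (v : α → κ → ℝ) :
    tensorVec p (𝔼 j ∈ s, v j) = 𝔼 j ∈ s, tensorVec p (v j) := by
  funext x
  simp only [tensorVec, Finset.expect_apply, Finset.mul_expect]

theorem tensorVec_expect_mixedPower (a b : ι → ℝ) (K : ℕ) :
    tensorVec b (𝔼 l ∈ Finset.range K, mixedPower a b K l) =
      tensorVec a (𝔼 l ∈ Finset.range K, mixedPower a b K (l + 1)) ∘ cyclicShift ι K := by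
  rw [tensorVec_expect, tensorVec_expect,
    Finset.expect_congr rfl fun l hl => tensorVec_mixedPower a b (Finset.mem_range.mp hl)]
  funext x
  simp only [Function.comp_apply, Finset.expect_apply]

theorem exists_embezzling_catalyst [Fintype ι] {a b : ι → ℝ} (ha : IsProbVec a)
    (hb : IsProbVec b) {ε : ℝ} (hε : 0 < ε) :
    ∃ (n : ℕ) (ω ω' : Fin n → ℝ), IsProbVec ω ∧ IsProbVec ω' ∧ traceDist ω ω' ≤ ε ∧
      Majorizes (tensorVec b ω) (tensorVec a ω') := by
  classical
  obtain ⟨K, hK⟩ := exists_nat_one_div_lt hε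
  let v := mixedPower a b (K + 1)
  have hv (l : ℕ) : IsProbVec (v l) := isProbVec_mixedPower ha hb (K + 1) l
  have range_nonempty : (Finset.range (K + 1)).Nonempty := Finset.nonempty_range_add_one
  let e := (Fintype.equivFin (Fin (K + 1) → ι)).symm
  refine ⟨_, (𝔼 l ∈ Finset.range (K + 1), v l) ∘ e, (𝔼 l ∈ Finset.range (K + 1), v (l + 1)) ∘ e,
    (isProbVec_expect range_nonempty fun l _ => hv l).comp_equiv e,
    (isProbVec_expect range_nonempty fun l _ => hv (l + 1)).comp_equiv e, ?_, ?_⟩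
  · calc traceDist _ _ = traceDist (v 0) (v (K + 1)) / (K + 1 : ℕ) := by
          rw [traceDist_comp_equiv, traceDist_expect_range_succ]
      _ ≤ 1 / (K + 1 : ℕ) := by gcongr; exact (hv 0).traceDist_le_one (hv (K + 1))
      _ ≤ ε := by exact_mod_cast hK.le
  · have hmaj : Majorizes (tensorVec b (𝔼 l ∈ Finset.range (K + 1), v l))
        (tensorVec a (𝔼 l ∈ Finset.range (K + 1), v (l + 1))) :=
      tensorVec_expect_mixedPower a b (K + 1) ▸ majorizes_comp_perm _ _
    exact hmaj.comp_equiv ((Equiv.refl ι).prodCongr e)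

end Embezzling

theorem thermal_embezzling_general (ι : Type*) [Fintype ι] {ε : ℝ} (hε : 0 < ε) :
    ∃ (n : ℕ) (ω ω' : Fin n → ℝ), IsProbVec ω ∧ IsProbVec ω' ∧ traceDist ω ω' ≤ ε ∧
      ∀ p p' : ι → ℝ, ∑ i, p i = 1 → IsProbVec p' →
        Majorizes (tensorVec p ω) (tensorVec p' ω') := by
  classical
  rcases isEmpty_or_nonempty ι with _ | _
  · exact ⟨1, Pi.single 0 1, Pi.single 0 1, isProbVec_single 0, isProbVec_single 0,
      by simpa [traceDist] using hε.le, fun p _ hp => by simp at hp⟩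
  let c : ι := Classical.arbitrary ι
  obtain ⟨n, ω, ω', hω, hω', hdist, hcatalyst⟩ :=
    exists_embezzling_catalyst (isProbVec_single c) (isProbVec_uniform ι) hε
  refine ⟨n, ω, ω', hω, hω', hdist, fun p p' hp hp' => ?_⟩
  have expect_eq : 𝔼 i, p i = (Fintype.card ι : ℝ)⁻¹ := by
    rw [Fintype.expect_eq_sum_div_card, hp, one_div]
  have p_majorizes_uniform := expect_eq ▸ tensorVec_majorizes_tensorVec_expect p ω
  have single_majorizes_p' := tensorVec_single_majorizes_tensorVec c hp' ω'
  exact (p_majorizes_uniform.trans hcatalyst).trans single_majorizes_p'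

/-- **Thermal embezzling (fully degenerate Hamiltonians).** For every dimension `d` and every
`ε > 0` there is a catalyst `ω` (of some finite dimension `n`) such that every transition
`p → p'` between `d`-dimensional probability vectors is enabled: `p ⊗ ω ≻ p' ⊗ ω'` for some
`ω'` with `d(ω, ω') ≤ ε`. -/
theorem thermal_embezzling :
    ∀ (d : ℕ) (ε : ℝ), 0 < ε →
      ∃ (n : ℕ) (ω : Fin n → ℝ), IsProbVec ω ∧
        ∀ p p' : Fin d → ℝ, IsProbVec p → IsProbVec p' →
          ∃ ω' : Fin n → ℝ, IsProbVec ω' ∧ traceDist ω ω' ≤ ε ∧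
            Majorizes (tensorVec p ω) (tensorVec p' ω') := by
  intro d ε hε
  obtain ⟨n, ω, ω', hω, hω', hdist, hmaj⟩ := thermal_embezzling_general (Fin d) hε
  exact ⟨n, ω, hω, fun p p' hp hp' => ⟨ω', hω', hdist, hmaj p p' hp.2 hp'⟩⟩
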